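/- arXiv:2602.05051 — 2 statements merged into one kernel-verified Lean document; each statement's English description precedes it below -/
import Mathlib

section
/- Let E be a real inner product space, let l > 0, and let z, v ∈ E with ‖z‖ ≤ l. Define the projected Euler update z' as follows: if ‖z + v‖ ≤ l then z' = z + v; otherwise z' = (z + v) − ⟪v, n⟫ • n, where n = ‖z + v‖⁻¹ • (z + v). Then ‖z'‖ ≤ l. -/
open scoped RealInnerProductSpace Classical

/-!
Put `w = z + v` and let `n` be the unit vector in the direction of `w`. Since `w` is a multiple of
`n`, it equals its own component `⟪n, w⟫ • n`, so subtracting the component of `v` along `n` leaves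
the component of `z` along `n`, whose norm is at most `‖z‖` by Cauchy–Schwarz.
-/

section ProjectedEulerStep

variable (𝕜 : Type*) {E : Type*} [RCLike 𝕜] [SeminormedAddCommGroup E] [InnerProductSpace 𝕜 E]

/-- The outward unit normal at `w` to the sphere centered at the origin that passes through `w`,
along which a projected Euler step corrects its increment. The scalar is taken in `𝕜`, so that no
real structure on `E` is needed, unlike for `NormedSpace.normalize`. It is a unit vector only if
`‖w‖ ≠ 0`; otherwise it is the junk value `0`. -/
noncomputable def outwardUnitNormal (w : E) : E := (‖w‖⁻¹ : 𝕜) • w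

theorem norm_outwardUnitNormal_le_one (w : E) : ‖outwardUnitNormal 𝕜 w‖ ≤ 1 := by
  rw [outwardUnitNormal, norm_smul, norm_inv, RCLike.norm_ofReal, abs_norm]
  exact inv_mul_le_one

theorem norm_smul_outwardUnitNormal {w : E} (hw : ‖w‖ ≠ 0) :
    (‖w‖ : 𝕜) • outwardUnitNormal 𝕜 w = w :=
  smul_inv_smul₀ (RCLike.ofReal_ne_zero.mpr hw) w

theorem inner_outwardUnitNormal_self (w : E) : inner 𝕜 (outwardUnitNormal 𝕜 w) w = ‖w‖ := by
  rw [outwardUnitNormal, inner_smul_left, inner_self_eq_norm_sq_to_K, map_inv₀, RCLike.conj_ofReal,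
    sq, ← mul_assoc, inv_mul_mul_self]

variable {𝕜}

theorem norm_inner_smul_self_le {n : E} (hn : ‖n‖ ≤ 1) (x : E) : ‖inner 𝕜 n x • n‖ ≤ ‖x‖ :=
  calc
    ‖inner 𝕜 n x • n‖ = ‖inner 𝕜 n x‖ * ‖n‖ := norm_smul _ _
    _ ≤ ‖n‖ * ‖x‖ * ‖n‖ := by gcongr; exact norm_inner_le_norm n x
    _ ≤ 1 * ‖x‖ * 1 := by gcongr
    _ = ‖x‖ := by rw [one_mul, mul_one]

theorem add_sub_inner_smul_eq_inner_smul {n z v : E} (h : inner 𝕜 n (z + v) • n = z + v) :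
    z + v - inner 𝕜 n v • n = inner 𝕜 n z • n := by
  rw [sub_eq_iff_eq_add, ← add_smul, ← inner_add_right, h]

theorem norm_add_sub_inner_outwardUnitNormal_smul_le {z v : E} (h : ‖z + v‖ ≠ 0) :
    ‖z + v - inner 𝕜 (outwardUnitNormal 𝕜 (z + v)) v • outwardUnitNormal 𝕜 (z + v)‖ ≤ ‖z‖ := by
  rw [add_sub_inner_smul_eq_inner_smul
    (by rw [inner_outwardUnitNormal_self, norm_smul_outwardUnitNormal 𝕜 h])]
  exact norm_inner_smul_self_le (norm_outwardUnitNormal_le_one 𝕜 _) z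

theorem projected_euler_step_norm_le_general {l : ℝ} {z : E} (hz : ‖z‖ ≤ l) (v : E) :
    ‖if ‖z + v‖ ≤ l then z + v
      else z + v - inner 𝕜 (outwardUnitNormal 𝕜 (z + v)) v • outwardUnitNormal 𝕜 (z + v)‖ ≤ l := by
  split_ifs with h
  · exact h
  · have hpos : 0 < ‖z + v‖ := ((norm_nonneg z).trans hz).trans_lt (not_le.mp h)
    exact (norm_add_sub_inner_outwardUnitNormal_smul_le hpos.ne').trans hz

end ProjectedEulerStep

theorem projected_euler_step_norm_le {E : Type*} [NormedAddCommGroup E]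
    [InnerProductSpace ℝ E] (l : ℝ) (hl : 0 < l) (z v : E) (hz : ‖z‖ ≤ l) :
    ‖if ‖z + v‖ ≤ l then z + v
      else (z + v) - ⟪v, ‖z + v‖⁻¹ • (z + v)⟫ • (‖z + v‖⁻¹ • (z + v))‖ ≤ l := by
  rw [real_inner_comm]
  exact projected_euler_step_norm_le_general (𝕜 := ℝ) hz v
end

section
/- Let E be a real inner product space, let l > 0, let F : ℕ → E → E be an arbitrary family of update maps (the velocity increments), and let w ∈ E with ‖w‖ ≤ l. Define a sequence z : ℕ → E by z₀ = w and, for each k, letting v = F k (z k) and ẑ = z k + v: z_{k+1} = ẑ if ‖ẑ‖ ≤ l, and z_{k+1} = ẑ − ⟪v, n⟫ • n with n = ‖ẑ‖⁻¹ • ẑ otherwise. Then ‖z_k‖ ≤ l for every k ∈ ℕ; in particular every iterate of the reflected Euler scheme remains in the closed ball of radius l centered at the origin. -/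
open scoped RealInnerProductSpace Classical

/-!
When the Euler step `z + v` leaves the ball, the increment `v` loses its orthogonal projection `P v`
onto the line spanned by `z + v`. Since `P` fixes `z + v`, what remains is `z + v - P v = P z`,
which is no longer than `z`.
-/

section InnerProductSpace

variable {𝕜 E : Type*} [RCLike 𝕜] [NormedAddCommGroup E] [InnerProductSpace 𝕜 E]

theorem add_sub_starProjection_of_add_mem {K : Submodule 𝕜 E} [K.HasOrthogonalProjection]
    {x v : E} (h : x + v ∈ K) : x + v - K.starProjection v = K.starProjection x := by
  rw [sub_eq_iff_eq_add, ← map_add, Submodule.starProjection_eq_self_iff.mpr h]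

theorem norm_add_sub_starProjection_le_of_add_mem {K : Submodule 𝕜 E} [K.HasOrthogonalProjection]
    {x v : E} (h : x + v ∈ K) : ‖x + v - K.starProjection v‖ ≤ ‖x‖ := by
  rw [add_sub_starProjection_of_add_mem h]
  exact K.norm_starProjection_apply_le x

variable (𝕜)

/-- One step of the reflected Euler scheme in the closed ball of radius `l` about the origin, from
`x` with increment `v`. The component of `v` along the outward normal at `x + v` is encoded as the
orthogonal projection onto the `𝕜`-line spanned by `x + v`, which avoids normalizing `x + v`. -/
noncomputable def reflectedEulerStep (l : ℝ) (x v : E) : E :=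
  if ‖x + v‖ ≤ l then x + v else x + v - (𝕜 ∙ (x + v)).starProjection v

theorem norm_reflectedEulerStep_le_max (l : ℝ) (x v : E) :
    ‖reflectedEulerStep 𝕜 l x v‖ ≤ max l ‖x‖ := by
  unfold reflectedEulerStep
  split_ifs with hball
  · exact le_max_of_le_left hball
  · exact le_max_of_le_right <|
      norm_add_sub_starProjection_le_of_add_mem (Submodule.mem_span_singleton_self _)

theorem reflected_euler_iterates_norm_le_general (l : ℝ) (z v : ℕ → E)
    (hstep : ∀ k, z (k + 1) = reflectedEulerStep 𝕜 l (z k) (v k)) (k : ℕ) :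
    ‖z k‖ ≤ max l ‖z 0‖ := by
  induction k with
  | zero => exact le_max_right _ _
  | succ k ih =>
    rw [hstep k]
    exact (norm_reflectedEulerStep_le_max 𝕜 l (z k) (v k)).trans (max_le (le_max_left _ _) ih)

end InnerProductSpace

section Real

variable {E : Type*} [NormedAddCommGroup E] [InnerProductSpace ℝ E]

theorem starProjection_span_singleton_eq_inner_normalized_smul (y v : E) :
    (ℝ ∙ y).starProjection v = ⟪v, ‖y‖⁻¹ • y⟫ • (‖y‖⁻¹ • y) := by
  rw [Submodule.starProjection_singleton, real_inner_smul_right, real_inner_comm, smul_smul]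
  congr 1
  rw [RCLike.ofReal_real_eq_id, id_eq]
  ring

theorem reflectedEulerStep_real (l : ℝ) (x v : E) :
    reflectedEulerStep ℝ l x v =
      if ‖x + v‖ ≤ l then x + v
      else (x + v) - ⟪v, ‖x + v‖⁻¹ • (x + v)⟫ • (‖x + v‖⁻¹ • (x + v)) := by
  rw [reflectedEulerStep, starProjection_span_singleton_eq_inner_normalized_smul]

end Real

theorem reflected_euler_iterates_norm_le {E : Type*} [NormedAddCommGroup E]
    [InnerProductSpace ℝ E] (l : ℝ) (hl : 0 < l) (F : ℕ → E → E)
    (w : E) (hw : ‖w‖ ≤ l) (z : ℕ → E) (hz0 : z 0 = w)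
    (hstep : ∀ k : ℕ, z (k + 1) =
      if ‖z k + F k (z k)‖ ≤ l then z k + F k (z k)
      else (z k + F k (z k))
        - ⟪F k (z k), ‖z k + F k (z k)‖⁻¹ • (z k + F k (z k))⟫
            • (‖z k + F k (z k)‖⁻¹ • (z k + F k (z k)))) :
    ∀ k : ℕ, ‖z k‖ ≤ l := by
  simp only [← reflectedEulerStep_real] at hstep
  simpa [hz0, hw] using reflected_euler_iterates_norm_le_general ℝ l z _ hstep
end
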